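/- arXiv:1712.00320 — 2 statements merged into one kernel-verified Lean document; each statement's English description precedes it below -/
import Mathlib

section
/- Let Ω ⊂ ℝⁿ be open, bounded, with C^{1,1} boundary, s ∈ (0,1), and β : ℝⁿ \ Ω → [0,1] measurable. Let N = supp(1−β) and define k_β as in the context. Then for every fixed x ∈ Ω there exists C = C(x) > 0 such that k_β(x,y) ≤ C·(1 + |ln dist(y, N)|) for all y ∈ Ω. In particular k_β(x,·) is finite on Ω. -/
open MeasureTheory Metric Set

/-- A bounded open set with `C^{1,1}` boundary: we encode the analytically relevant
consequence, namely the uniform interior and exterior sphere conditions. -/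
def HasC11Boundary {n : ℕ} (Ω : Set (EuclideanSpace ℝ (Fin n))) : Prop :=
  ∃ r > 0, ∀ p ∈ frontier Ω,
    (∃ x ∈ Ω, Metric.closedBall x r ⊆ closure Ω ∧ dist p x = r) ∧
    (∃ y ∈ (closure Ω)ᶜ, Metric.closedBall y r ⊆ Ωᶜ ∧ dist p y = r)

/-- The kernel k_β(x,y). -/
noncomputable def kBeta {n : ℕ} (s : ℝ) (Ω : Set (EuclideanSpace ℝ (Fin n)))
    (β : EuclideanSpace ℝ (Fin n) → ℝ) (x y : EuclideanSpace ℝ (Fin n)) : ℝ :=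
  ∫ z in Ωᶜ, (1 - β z) /
    (‖x - z‖ ^ ((n : ℝ) + 2*s) * ‖y - z‖ ^ ((n : ℝ) + 2*s) *
      ∫ w in Ω, ‖z - w‖ ^ (-((n : ℝ) + 2*s)))


/-- Interior touching balls: for `z ∉ Ω`, `y ∈ Ω`, and a radius `0 < t ≤ r`, `t ≤ ‖y - z‖`
there is a ball of radius `t` inside `Ω` at distance at most `3 ‖y - z‖` from `z`. -/
lemma aux_ball {n : ℕ} {Ω : Set (EuclideanSpace ℝ (Fin n))} (hΩo : IsOpen Ω) {r : ℝ} (hr : 0 < r)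
    (h : ∀ p ∈ frontier Ω,
      (∃ x ∈ Ω, Metric.closedBall x r ⊆ closure Ω ∧ dist p x = r) ∧
      (∃ y ∈ (closure Ω)ᶜ, Metric.closedBall y r ⊆ Ωᶜ ∧ dist p y = r))
    {y z : EuclideanSpace ℝ (Fin n)} (hy : y ∈ Ω) (hz : z ∈ Ωᶜ) {t : ℝ} (ht : 0 < t)
    (htr : t ≤ r) (hta : t ≤ ‖y - z‖) :
    ∃ c, ball c t ⊆ Ω ∧ ∀ w ∈ ball c t, ‖z - w‖ ≤ 3 * ‖y - z‖ := by
  have hint : interior (closure Ω) ⊆ Ω := by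
    intro p hp
    by_contra hpΩ
    have hpf : p ∈ frontier Ω := by
      rw [hΩo.frontier_eq]; exact ⟨interior_subset hp, hpΩ⟩
    obtain ⟨-, q, hq, hqb, hpq⟩ := h p hpf
    have h1 : Disjoint (ball q r) Ω :=
      Set.disjoint_left.2 fun w hw hwΩ => hqb (ball_subset_closedBall hw) hwΩ
    have h2 : Disjoint (ball q r) (closure Ω) := h1.closure_right isOpen_ball
    have h3 : p ∈ closure (ball q r) := by
      rw [closure_ball q hr.ne', mem_closedBall]; exact hpq.le
    obtain ⟨w, hw1, hw2⟩ := mem_closure_iff.1 h3 _ isOpen_interior hp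
    exact Set.disjoint_left.1 h2 hw2 (interior_subset hw1)
  obtain ⟨p, hps, hpf⟩ : (segment ℝ y z ∩ frontier Ω).Nonempty := by
    by_contra hne
    have hcl : ∀ w ∈ segment ℝ y z, w ∈ closure Ω → w ∈ Ω := by
      intro w hw hwc
      by_contra hwΩ
      exact hne ⟨w, hw, by rw [hΩo.frontier_eq]; exact ⟨hwc, hwΩ⟩⟩
    obtain ⟨w, -, hw1, hw2⟩ := (convex_segment y z).isPreconnected Ω (closure Ω)ᶜ hΩo
      isClosed_closure.isOpen_compl
      (fun w hw => by
        by_cases hwc : w ∈ closure Ω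
        · exact Or.inl (hcl w hw hwc)
        · exact Or.inr hwc)
      ⟨y, left_mem_segment ℝ y z, hy⟩
      ⟨z, right_mem_segment ℝ y z, fun hzc => hz (hcl z (right_mem_segment ℝ y z) hzc)⟩
    exact hw2 (subset_closure hw1)
  obtain ⟨⟨x0, hx0, hb, hd⟩, -⟩ := h p hpf
  have hbΩ : ball x0 r ⊆ Ω :=
    (interior_maximal (ball_subset_closedBall.trans hb) isOpen_ball).trans hint
  have hpz : ‖z - p‖ ≤ ‖y - z‖ := by
    have h1 := mem_segment_iff_wbtw.1 hps
    have := h1.dist_add_dist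
    rw [dist_eq_norm, dist_eq_norm, dist_eq_norm] at this
    rw [norm_sub_rev z p]
    linarith [norm_nonneg (y - p)]
  have hn : ‖x0 - p‖ = r := by rw [norm_sub_rev, ← dist_eq_norm]; exact hd
  have ht1 : t / r ≤ 1 := (div_le_one hr).2 htr
  refine ⟨p + (t / r) • (x0 - p), ?_, ?_⟩
  · refine (ball_subset_ball' ?_).trans hbΩ
    have : p + (t / r) • (x0 - p) - x0 = -((1 - t / r) • (x0 - p)) := by module
    rw [dist_eq_norm, this, norm_neg, norm_smul, hn, Real.norm_eq_abs, abs_of_nonneg (by linarith)]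
    field_simp
    linarith
  · intro w hw
    rw [mem_ball, dist_eq_norm] at hw
    have e : z - w = (z - p) + (-((t / r) • (x0 - p)) + -(w - (p + (t / r) • (x0 - p)))) := by
      abel
    have h1 : ‖-((t / r) • (x0 - p))‖ = t := by
      rw [norm_neg, norm_smul, hn, Real.norm_eq_abs, abs_of_nonneg (by positivity)]
      field_simp
    rw [e]
    refine (norm_add_le _ _).trans ?_
    have := norm_add_le (-((t / r) • (x0 - p))) (-(w - (p + (t / r) • (x0 - p))))
    rw [norm_neg (w - _)] at this
    linarith

lemma aux_inner {n : ℕ} {Ω : Set (EuclideanSpace ℝ (Fin n))} (hΩo : IsOpen Ω) {r : ℝ} (hr : 0 < r)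
    (h : ∀ p ∈ frontier Ω,
      (∃ x ∈ Ω, Metric.closedBall x r ⊆ closure Ω ∧ dist p x = r) ∧
      (∃ y ∈ (closure Ω)ᶜ, Metric.closedBall y r ⊆ Ωᶜ ∧ dist p y = r))
    {y z : EuclideanSpace ℝ (Fin n)} (hy : y ∈ Ω) (hz : z ∈ Ωᶜ) {t : ℝ} (ht : 0 < t)
    (htr : t ≤ r) (hta : t ≤ ‖y - z‖) {q : ℝ} (hq : 0 < q) :
    (∫ w in Ω, ‖z - w‖ ^ (-q)) = 0 ∨
      (3 * ‖y - z‖) ^ (-q) * (t ^ n * volume.real (ball (0 : EuclideanSpace ℝ (Fin n)) 1)) ≤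
        ∫ w in Ω, ‖z - w‖ ^ (-q) := by
  by_cases hi : IntegrableOn (fun w => ‖z - w‖ ^ (-q)) Ω
  swap
  · left; exact integral_undef hi
  right
  obtain ⟨c, hc, hcw⟩ := aux_ball hΩo hr h hy hz ht htr hta
  have hv : volume.real (ball c t) = t ^ n * volume.real (ball (0 : EuclideanSpace ℝ (Fin n)) 1) := by
    rw [measureReal_def, Measure.addHaar_ball_of_pos _ _ ht, ENNReal.toReal_mul, measureReal_def,
      ENNReal.toReal_ofReal (by positivity)]
    simp
  rw [← hv]
  calc _ ≤ ∫ w in ball c t, ‖z - w‖ ^ (-q) := by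
        refine setIntegral_ge_of_const_le_real measurableSet_ball measure_ball_lt_top.ne ?_
          (hi.mono_set hc)
        intro w hw
        refine Real.rpow_le_rpow_of_nonpos ?_ (hcw w hw) (by linarith)
        rw [norm_pos_iff, sub_ne_zero]
        rintro rfl
        exact hz (hc hw)
    _ ≤ _ := by
        refine setIntegral_mono_set hi ?_ (LE.le.eventuallyLE hc)
        exact Filter.Eventually.of_forall fun w => by positivity

/-- Pointwise bound of the kernel integrand. -/
lemma aux_pt {q A B I V t v : ℝ} {n : ℕ} (hA : 0 < A) (hB : 0 < B) (hV : 0 < V) (ht : 0 < t)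
    (hv0 : 0 ≤ v) (hv1 : v ≤ 1)
    (hI : I = 0 ∨ (3 * B) ^ (-q) * (t ^ n * V) ≤ I) :
    v / (A ^ q * B ^ q * I) ≤ 3 ^ q / V * (A ^ (-q) * (t ^ n)⁻¹) := by
  rcases hI with rfl | hI
  · rw [mul_zero, div_zero]; positivity
  · have h0 : 0 < (3 * B) ^ (-q) * (t ^ n * V) := by positivity
    calc v / (A ^ q * B ^ q * I) ≤ 1 / (A ^ q * B ^ q * ((3 * B) ^ (-q) * (t ^ n * V))) := by
          gcongr
      _ = _ := by
          rw [Real.rpow_neg (by positivity), Real.rpow_neg hA.le, Real.mul_rpow (by norm_num) hB.le]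
          have := Real.rpow_pos_of_pos hA q
          have := Real.rpow_pos_of_pos hB q
          have := Real.rpow_pos_of_pos (show (0:ℝ) < 3 by norm_num) q
          field_simp

/-- The logarithmic shell integral. -/
lemma aux_shell {n : ℕ} (hn : n ≠ 0) {ρ r : ℝ} (hρ : 0 < ρ) (hr : 0 < r) :
    Integrable (fun w : EuclideanSpace ℝ (Fin n) =>
      (Icc ρ r).indicator (fun a : ℝ => (a ^ n)⁻¹) ‖w‖) ∧
    ∫ w : EuclideanSpace ℝ (Fin n), (Icc ρ r).indicator (fun a : ℝ => (a ^ n)⁻¹) ‖w‖ ≤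
      n * volume.real (ball (0 : EuclideanSpace ℝ (Fin n)) 1) * (|Real.log r| + |Real.log ρ|) := by
  have : Nonempty (Fin n) := ⟨⟨0, Nat.pos_of_ne_zero hn⟩⟩
  have : Nontrivial (EuclideanSpace ℝ (Fin n)) := inferInstance
  have e : ∀ y : ℝ, y ^ (n - 1) • (Icc ρ r).indicator (fun a : ℝ => (a ^ n)⁻¹) y =
      (Icc ρ r).indicator (fun a : ℝ => a⁻¹) y := by
    intro y
    by_cases hy : y ∈ Icc ρ r
    · rw [indicator_of_mem hy, indicator_of_mem hy, smul_eq_mul]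
      have hy0 : 0 < y := hρ.trans_le hy.1
      obtain ⟨m, rfl⟩ := Nat.exists_eq_succ_of_ne_zero hn
      simp only [Nat.succ_eq_add_one, Nat.add_sub_cancel, pow_succ]
      field_simp
    · rw [indicator_of_notMem hy, indicator_of_notMem hy, smul_zero]
  have hsub : Icc ρ r ⊆ Ioi 0 := fun a ha => hρ.trans_le ha.1
  constructor
  · rw [integrable_fun_norm_addHaar volume (f := (Icc ρ r).indicator (fun a : ℝ => (a ^ n)⁻¹))]
    simp only [finrank_euclideanSpace, Fintype.card_fin, e]
    refine Integrable.integrableOn ?_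
    rw [integrable_indicator_iff measurableSet_Icc]
    refine ContinuousOn.integrableOn_Icc ?_
    exact continuousOn_inv₀.mono fun a ha => (hsub ha).ne'
  · rw [integral_fun_norm_addHaar volume ((Icc ρ r).indicator (fun a : ℝ => (a ^ n)⁻¹))]
    simp only [finrank_euclideanSpace, Fintype.card_fin, e]
    rw [setIntegral_indicator measurableSet_Icc, inter_eq_self_of_subset_right hsub, nsmul_eq_mul,
      smul_eq_mul, mul_assoc]
    gcongr
    rcases le_or_gt ρ r with hle | hlt
    · rw [integral_Icc_eq_integral_Ioc, ← intervalIntegral.integral_of_le hle,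
        integral_inv_of_pos hρ hr, Real.log_div hr.ne' hρ.ne']
      linarith [le_abs_self (Real.log r), neg_abs_le (Real.log ρ)]
    · rw [Icc_eq_empty hlt.not_ge]
      simp only [Measure.restrict_empty, integral_zero_measure]
      positivity

/-- Lemma 2.2: with N = supp(1−β) = closure {z ∈ ℝⁿ\Ω : β z ≠ 1},
for every x ∈ Ω there is C = C(x) > 0 with
k_β(x,y) ≤ C·(1 + |ln dist(y, N)|) for all y ∈ Ω. -/
theorem stmt7 {n : ℕ} (Ω : Set (EuclideanSpace ℝ (Fin n)))
    (hΩo : IsOpen Ω) (hΩb : Bornology.IsBounded Ω) (hΩc : HasC11Boundary Ω)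
    (s : ℝ) (hs : s ∈ Set.Ioo (0:ℝ) 1)
    (β : EuclideanSpace ℝ (Fin n) → ℝ) (hβm : Measurable β)
    (hβ01 : ∀ z ∈ Ωᶜ, β z ∈ Set.Icc (0:ℝ) 1) :
    ∀ x ∈ Ω, ∃ C > 0, ∀ y ∈ Ω,
      kBeta s Ω β x y ≤
        C * (1 + |Real.log (Metric.infDist y (closure {z | z ∈ Ωᶜ ∧ β z ≠ 1}))|) := by
  intro x hx
  obtain ⟨r, hr, h⟩ := hΩc
  rcases eq_or_ne n 0 with rfl | hn
  · refine ⟨1, one_pos, fun y hy => ?_⟩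
    have : Ωᶜ = ∅ := by
      ext z
      simp [Subsingleton.elim z x, hx]
    unfold kBeta
    rw [this]
    simp only [Measure.restrict_empty, integral_zero_measure]
    positivity
  set q : ℝ := (n : ℝ) + 2 * s with hqdef
  have hs0 := hs.1
  have hqn : (n : ℝ) < q := by linarith
  have hq : 0 < q := lt_of_le_of_lt (Nat.cast_nonneg n) hqn
  set V := volume.real (ball (0 : EuclideanSpace ℝ (Fin n)) 1) with hVdef
  have hV : 0 < V := ENNReal.toReal_pos (measure_ball_pos _ _ one_pos).ne' measure_ball_lt_top.ne
  obtain ⟨δ, hδ, hδb⟩ := Metric.isOpen_iff.1 hΩo x hx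
  have hxz : ∀ z ∈ Ωᶜ, δ ≤ ‖x - z‖ := by
    intro z hz
    by_contra! hlt
    exact hz (hδb (by rwa [mem_ball, dist_comm, dist_eq_norm]))
  set K : ℝ := 3 ^ q / V with hK
  have hK0 : 0 < K := by positivity
  set M : ℝ := (1 / δ + 1) ^ q with hM
  have hM0 : 0 < M := by positivity
  have hxM : ∀ z ∈ Ωᶜ, ‖x - z‖ ^ (-q) ≤ M * (1 + ‖x - z‖) ^ (-q) := by
    intro z hz
    have h1 := hxz z hz
    have h0 : 0 < ‖x - z‖ := hδ.trans_le h1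
    rw [Real.rpow_neg h0.le, Real.rpow_neg (by positivity), ← div_eq_mul_inv,
      ← Real.div_rpow (by positivity) (by positivity), ← Real.inv_rpow h0.le]
    refine Real.rpow_le_rpow (by positivity) ?_ hq.le
    rw [le_div_iff₀ (by positivity), mul_add, inv_mul_cancel₀ h0.ne', mul_one]
    gcongr
    rw [← one_div]
    gcongr
  have hJint : Integrable (fun z : EuclideanSpace ℝ (Fin n) => (1 + ‖x - z‖) ^ (-q)) :=
    (integrable_one_add_norm (μ := (volume : Measure (EuclideanSpace ℝ (Fin n))))
      (by simpa using hqn)).comp_sub_left x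
  set J : ℝ := ∫ z : EuclideanSpace ℝ (Fin n), (1 + ‖x - z‖) ^ (-q) with hJ
  have hJ0 : 0 ≤ J := integral_nonneg fun z => by positivity
  set c1 : ℝ := K * (M * (r ^ n)⁻¹) with hc1
  set c2 : ℝ := K * δ ^ (-q) with hc2
  have hc10 : 0 < c1 := by positivity
  have hc20 : 0 < c2 := by positivity
  set D : ℝ := c2 * (n * V) with hD
  have hD0 : 0 ≤ D := by positivity
  refine ⟨c1 * J + D * |Real.log r| + D + 1, by positivity, fun y hy => ?_⟩
  set N := closure {z | z ∈ Ωᶜ ∧ β z ≠ 1} with hN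
  set ρ := Metric.infDist y N with hρdef
  rcases Set.eq_empty_or_nonempty N with hNe | hNne
  · have hz0 : kBeta s Ω β x y = 0 := by
      unfold kBeta
      refine setIntegral_eq_zero_of_forall_eq_zero fun z hz => ?_
      have : β z = 1 := by
        by_contra hne
        have : z ∈ N := subset_closure ⟨hz, hne⟩
        rw [hNe] at this
        exact this
      rw [this]; simp
    rw [hz0]; positivity
  have hNΩ : N ⊆ Ωᶜ := closure_minimal (fun z hz => hz.1) hΩo.isClosed_compl
  have hρ : 0 < ρ := (isClosed_closure.notMem_iff_infDist_pos hNne).1 fun hyN => hNΩ hyN hy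
  obtain ⟨hSint, hSle⟩ := aux_shell hn hρ hr
  set S : EuclideanSpace ℝ (Fin n) → ℝ := fun w =>
      (Icc ρ r).indicator (fun a : ℝ => (a ^ n)⁻¹) ‖w‖ with hS
  have hS0 : ∀ w, 0 ≤ S w := fun w => indicator_nonneg (fun a ha => by
    have := hρ.trans_le ha.1
    positivity) _
  have hSint' : Integrable (fun z => S (y - z)) := hSint.comp_sub_left y
  have hSe : ∫ z, S (y - z) = ∫ z, S z := integral_sub_left_eq_self S volume y
  set g : EuclideanSpace ℝ (Fin n) → ℝ := fun z => c1 * (1 + ‖x - z‖) ^ (-q) + c2 * S (y - z) with hg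
  have hg0 : ∀ z, 0 ≤ g z := fun z => by
    have := hS0 (y - z)
    simp only [hg]
    positivity
  have hgint : Integrable g := (hJint.const_mul c1).add (hSint'.const_mul c2)
  have hgI : ∫ z, g z = c1 * J + c2 * ∫ z, S z := by
    rw [integral_add (hJint.const_mul c1) (hSint'.const_mul c2), integral_const_mul,
      integral_const_mul, hSe]
  have hpt : ∀ z ∈ Ωᶜ, 0 ≤ (1 - β z) / (‖x - z‖ ^ q * ‖y - z‖ ^ q * ∫ w in Ω, ‖z - w‖ ^ (-q)) ∧
      (1 - β z) / (‖x - z‖ ^ q * ‖y - z‖ ^ q * ∫ w in Ω, ‖z - w‖ ^ (-q)) ≤ g z := by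
    intro z hz
    have hb := hβ01 z hz
    constructor
    · have hb1 : 0 ≤ 1 - β z := by linarith [hb.2]
      have : 0 ≤ ∫ w in Ω, ‖z - w‖ ^ (-q) := integral_nonneg fun w => by positivity
      positivity
    by_cases hβ1 : β z = 1
    · rw [hβ1, sub_self, zero_div]; exact hg0 z
    have hzN : z ∈ N := subset_closure ⟨hz, hβ1⟩
    have hρz : ρ ≤ ‖y - z‖ := by
      rw [← dist_eq_norm]; exact Metric.infDist_le_dist_of_mem hzN
    have hB : 0 < ‖y - z‖ := hρ.trans_le hρz
    have hA : 0 < ‖x - z‖ := hδ.trans_le (hxz z hz)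
    have ht : 0 < min ‖y - z‖ r := lt_min hB hr
    have hI := aux_inner hΩo hr h hy hz ht (min_le_right _ _) (min_le_left _ _) hq
    refine (aux_pt hA hB hV ht (by linarith [hb.2]) (by linarith [hb.1]) hI).trans ?_
    simp only [hg]
    rcases le_or_gt ‖y - z‖ r with hle | hlt
    · rw [min_eq_left hle]
      have h1 : S (y - z) = (‖y - z‖ ^ n)⁻¹ := by
        simp only [hS]; exact indicator_of_mem (show ‖y - z‖ ∈ Icc ρ r from ⟨hρz, hle⟩) _
      rw [h1]
      have h2 : ‖x - z‖ ^ (-q) ≤ δ ^ (-q) :=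
        Real.rpow_le_rpow_of_nonpos hδ (hxz z hz) (by linarith)
      have h3 : 0 ≤ c1 * (1 + ‖x - z‖) ^ (-q) := by positivity
      refine le_trans ?_ (le_add_of_nonneg_left h3)
      rw [hc2, mul_assoc]
      gcongr
    · rw [min_eq_right hlt.le]
      have h3 : 0 ≤ c2 * S (y - z) := mul_nonneg hc20.le (hS0 _)
      refine le_trans ?_ (le_add_of_nonneg_right h3)
      calc K * (‖x - z‖ ^ (-q) * (r ^ n)⁻¹)
          ≤ K * ((M * (1 + ‖x - z‖) ^ (-q)) * (r ^ n)⁻¹) := by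
            gcongr
            exact hxM z hz
        _ = _ := by rw [hc1]; ring
  have hk : kBeta s Ω β x y ≤ ∫ z, g z := by
    have hm : MeasurableSet Ωᶜ := hΩo.measurableSet.compl
    calc kBeta s Ω β x y ≤ ∫ z in Ωᶜ, g z := by
          unfold kBeta
          refine integral_mono_of_nonneg ?_ hgint.integrableOn ?_
          · exact (ae_restrict_iff' hm).2 (Filter.Eventually.of_forall fun z hz => (hpt z hz).1)
          · exact (ae_restrict_iff' hm).2 (Filter.Eventually.of_forall fun z hz => (hpt z hz).2)
      _ ≤ ∫ z, g z := setIntegral_le_integral hgint (Filter.Eventually.of_forall hg0)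
  refine hk.trans ?_
  rw [hgI]
  have h5 : c2 * ∫ z, S z ≤ D * (|Real.log r| + |Real.log ρ|) := by
    rw [hD, mul_assoc c2]
    exact mul_le_mul_of_nonneg_left hSle hc20.le
  have h6 : 0 ≤ (c1 * J + D * |Real.log r| + 1) * |Real.log ρ| := by positivity
  nlinarith
end

section
/- Let Ω ⊂ ℝⁿ be open, bounded, with C^{1,1} boundary, s ∈ (0,1), α > 0, and let u ∈ C^{2s+α}_loc(Ω) ∩ L^∞(ℝⁿ) satisfy the nonlocal Robin condition β(x)u(x) + (1−β(x))·Ñ_s u(x) = 0 for a.e. x ∈ ℝⁿ\Ω, where β : ℝⁿ → [0,1] is measurable with β = 0 in Ω. Then for every x ∈ Ω, (−Δ)^s u(x) = (−Δ)^s_Ω u(x) − u(x)·(−Δ)^s β(x) + c_{n,s} ∫_Ω (u(x)−u(y)) k_β(x,y) dy. -/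
open MeasureTheory Metric Set Filter

/-- `u ∈ C^γ_loc(Ω)`: near every point of Ω, u is γ-Hölder if γ ≤ 1, and
differentiable with (γ−1)-Hölder derivative if γ > 1 (here 0 < γ ≤ 2). -/
def HolderLoc {n : ℕ} (γ : ℝ) (Ω : Set (EuclideanSpace ℝ (Fin n)))
    (u : EuclideanSpace ℝ (Fin n) → ℝ) : Prop :=
  ∀ x ∈ Ω, ∃ ε > 0, Metric.ball x ε ⊆ Ω ∧
    ((γ ≤ 1 → ∃ C : NNReal, HolderOnWith C γ.toNNReal u (Metric.ball x ε)) ∧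
     (1 < γ → ∃ (C : NNReal) (du : EuclideanSpace ℝ (Fin n) →
          (EuclideanSpace ℝ (Fin n) →L[ℝ] ℝ)),
        (∀ y ∈ Metric.ball x ε, HasFDerivAt u (du y) y) ∧
        HolderOnWith C (γ - 1).toNNReal du (Metric.ball x ε)))

/-- The normalized nonlocal normal derivative Ñ_s u(x), for x ∈ ℝⁿ\Ω. -/
noncomputable def NNder {n : ℕ} (s : ℝ) (Ω : Set (EuclideanSpace ℝ (Fin n)))
    (u : EuclideanSpace ℝ (Fin n) → ℝ) (x : EuclideanSpace ℝ (Fin n)) : ℝ :=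
  (∫ y in Ω, ‖x - y‖ ^ (-((n : ℝ) + 2*s)))⁻¹ *
    ∫ y in Ω, (u x - u y) * ‖x - y‖ ^ (-((n : ℝ) + 2*s))

lemma kmeas {n : ℕ} (p : ℝ) (x : EuclideanSpace ℝ (Fin n)) :
    Measurable (fun y : EuclideanSpace ℝ (Fin n) => ‖x - y‖ ^ p) :=
  Measurable.pow_const (measurable_const.sub measurable_id).norm p

lemma far_int {n : ℕ} (s : ℝ) (hs : 0 < s) (x : EuclideanSpace ℝ (Fin n)) (ε : ℝ) (hε : 0 < ε) :
    IntegrableOn (fun y => ‖x - y‖ ^ (-((n : ℝ) + 2*s))) (ball x ε)ᶜ := by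
  have h1 : Integrable (fun y : EuclideanSpace ℝ (Fin n) => (1 + ‖y‖) ^ (-((n : ℝ) + 2*s))) :=
    integrable_one_add_norm (by simp; linarith)
  have h2 := h1.comp_sub_left x
  have h3 := (h2.const_mul ((ε / (1 + ε)) ^ (-((n : ℝ) + 2*s)))).integrableOn (s := (ball x ε)ᶜ)
  refine h3.mono' (kmeas _ x).aestronglyMeasurable ?_
  refine (ae_restrict_iff' measurableSet_ball.compl).2 (Eventually.of_forall fun y hy => ?_)
  have hy' : ε ≤ ‖x - y‖ := by
    simpa [dist_eq_norm, norm_sub_rev] using hy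
  rw [Real.norm_of_nonneg (by positivity), ← Real.mul_rpow (by positivity) (by positivity)]
  apply Real.rpow_le_rpow_of_nonpos (by positivity)
  · rw [div_mul_eq_mul_div, div_le_iff₀ (by positivity)]
    nlinarith
  · have : (0:ℝ) ≤ n := by positivity
    linarith

lemma near_int {n : ℕ} (α : ℝ) (hα : 0 < α) (x : EuclideanSpace ℝ (Fin n)) (r : ℝ) :
    IntegrableOn (fun y => ‖x - y‖ ^ (α - n)) (ball x r) := by
  rcases Nat.eq_zero_or_pos n with rfl | hn
  · have : IsFiniteMeasure (volume : Measure (EuclideanSpace ℝ (Fin 0))) :=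
      ⟨isCompact_univ.measure_lt_top⟩
    have h : (fun y : EuclideanSpace ℝ (Fin 0) => ‖x - y‖ ^ (α - (0:ℕ))) = fun y => 0 ^ (α - (0:ℕ)) := by
      ext y; simp [Subsingleton.elim x y]
    rw [h]; exact integrable_const _
  have : Nonempty (Fin n) := ⟨⟨0, hn⟩⟩
  have : Nontrivial (EuclideanSpace ℝ (Fin n)) := inferInstance
  have key : IntegrableOn (fun y : EuclideanSpace ℝ (Fin n) => ‖y‖ ^ (α - n)) (ball 0 r) := by
    rw [integrableOn_fun_norm_addHaar volume (f := fun t => t ^ (α - n))]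
    have : IntegrableOn (fun t : ℝ => t ^ (α - 1)) (Ioo 0 r) := by
      rcases le_or_gt r 0 with h | h
      · simp [Ioo_eq_empty_of_le h]
      · have := intervalIntegral.intervalIntegrable_rpow' (r := α - 1) (by linarith) (a := 0) (b := r)
        rw [intervalIntegrable_iff_integrableOn_Ioo_of_le h.le] at this
        exact this
    refine this.congr_fun (fun t ht => ?_) measurableSet_Ioo
    simp only [finrank_euclideanSpace, Fintype.card_fin, smul_eq_mul]
    rw [← Real.rpow_natCast, ← Real.rpow_add ht.1, Nat.cast_sub hn]
    congr 1; push_cast; ring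
  rw [← integrable_indicator_iff measurableSet_ball] at key ⊢
  refine (key.comp_sub_left x).congr (Eventually.of_forall fun y => ?_)
  by_cases h : y ∈ ball x r
  · have : x - y ∈ ball (0 : EuclideanSpace ℝ (Fin n)) r := by
      simpa [dist_eq_norm, norm_sub_rev] using h
    simp only [indicator_of_mem h, indicator_of_mem this]
  · have : x - y ∉ ball (0 : EuclideanSpace ℝ (Fin n)) r := by
      simpa [dist_eq_norm, norm_sub_rev] using h
    simp only [indicator_of_notMem h, indicator_of_notMem this]

lemma odd_int {n : ℕ} (p r ε : ℝ) (x : EuclideanSpace ℝ (Fin n))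
    (l : EuclideanSpace ℝ (Fin n) →L[ℝ] ℝ) :
    ∫ y in ball x r \ ball x ε, l (y - x) * ‖x - y‖ ^ p = 0 := by
  rw [← integral_indicator (measurableSet_ball.diff measurableSet_ball)]
  set f := (ball x r \ ball x ε).indicator fun y => l (y - x) * ‖x - y‖ ^ p with hf
  have hodd : ∀ y, f (x - (-y)) = - f (x - y) := by
    intro y
    have e : (x - (-y) ∈ ball x r \ ball x ε) ↔ (x - y ∈ ball x r \ ball x ε) := by
      simp [dist_eq_norm]
    by_cases h : x - y ∈ ball x r \ ball x ε
    · rw [hf, indicator_of_mem h, indicator_of_mem (e.2 h)]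
      simp
    · rw [hf, indicator_of_notMem h, indicator_of_notMem (fun h' => h (e.1 h'))]
      simp
  have h1 : ∫ y, f (x - y) = ∫ y, f y := integral_sub_left_eq_self f volume x
  have h2 := integral_neg_eq_self (fun y => f (x - y)) volume
  simp only [hodd, integral_neg] at h2
  linarith

lemma approx {n : ℕ} (γ : ℝ) (hγ : 0 < γ)
    (u : EuclideanSpace ℝ (Fin n) → ℝ) (x : EuclideanSpace ℝ (Fin n)) (ε : ℝ) (hε : 0 < ε)
    (h : (γ ≤ 1 → ∃ C : NNReal, HolderOnWith C γ.toNNReal u (Metric.ball x ε)) ∧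
     (1 < γ → ∃ (C : NNReal) (du : EuclideanSpace ℝ (Fin n) →
          (EuclideanSpace ℝ (Fin n) →L[ℝ] ℝ)),
        (∀ y ∈ Metric.ball x ε, HasFDerivAt u (du y) y) ∧
        HolderOnWith C (γ - 1).toNNReal du (Metric.ball x ε))) :
    ∃ (C : ℝ) (l : EuclideanSpace ℝ (Fin n) →L[ℝ] ℝ), 0 ≤ C ∧ ∀ y ∈ ball x ε,
      |u x - u y + l (y - x)| ≤ C * ‖x - y‖ ^ γ := by
  have hx : x ∈ ball x ε := mem_ball_self hε
  rcases le_or_gt γ 1 with h1 | h1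
  · obtain ⟨C, hC⟩ := h.1 h1
    refine ⟨C, 0, C.2, fun y hy => ?_⟩
    have := hC.dist_le hx hy
    rw [Real.dist_eq, dist_eq_norm, Real.coe_toNNReal _ hγ.le] at this
    simpa using this
  · obtain ⟨C, du, hd, hC⟩ := h.2 h1
    refine ⟨C, du x, C.2, fun y hy => ?_⟩
    have hsub : closedBall x ‖y - x‖ ⊆ ball x ε :=
      closedBall_subset_ball (by simpa [dist_eq_norm] using hy)
    have := (convex_closedBall x ‖y - x‖).norm_image_sub_le_of_norm_hasFDerivWithin_le'
      (f := u) (f' := du) (φ := du x) (C := C * ‖y - x‖ ^ (γ - 1)) (x := x) (y := y)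
      (fun z hz => (hd z (hsub hz)).hasFDerivWithinAt) (fun z hz => by
        have := hC.dist_le (hsub hz) hx
        rw [dist_eq_norm, Real.coe_toNNReal _ (by linarith)] at this
        refine this.trans ?_
        have h0 : 0 ≤ γ - 1 := by linarith
        gcongr
        exact hz) (by simp) (by simp [dist_eq_norm])
    have e : C * ‖y - x‖ ^ (γ - 1) * ‖y - x‖ = C * ‖x - y‖ ^ γ := by
      rw [mul_assoc, ← Real.rpow_add_one' (norm_nonneg _) (by linarith), norm_sub_rev]
      simp
    rw [e, Real.norm_eq_abs] at this
    rw [← abs_neg]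
    convert this using 2
    ring

lemma frontier_null {n : ℕ} (Ω : Set (EuclideanSpace ℝ (Fin n))) (r : ℝ) (hr : 0 < r)
    (h : ∀ p ∈ frontier Ω, ∃ y, closedBall y r ⊆ Ωᶜ ∧ dist p y = r) :
    volume (frontier Ω) = 0 := by
  have hd := IsUnifLocDoublingMeasure.ae_tendsto_measure_inter_div
    (volume : Measure (EuclideanSpace ℝ (Fin n))) (frontier Ω) 2
  rw [ae_restrict_iff' isClosed_frontier.measurableSet] at hd
  rw [measure_eq_zero_iff_ae_notMem]
  filter_upwards [hd] with p hp hpf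
  obtain ⟨y, hy, hpy⟩ := h p hpf
  have hdisj : ∀ z ∈ ball y r, z ∉ frontier Ω := by
    intro z hz hzf
    have : z ∈ closure Ω := frontier_subset_closure hzf
    rw [_root_.mem_closure_iff] at this
    obtain ⟨w, hw1, hw2⟩ := this (ball y r) isOpen_ball hz
    exact hy (ball_subset_closedBall hw1) hw2
  have ht := hp hpf (l := nhdsWithin (0:ℝ) (Ioi 0)) (fun δ => p + (2 * δ / r) • (y - p)) (fun δ => δ) tendsto_id
    (by
      filter_upwards [self_mem_nhdsWithin] with δ hδ
      have hδ : 0 < δ := hδ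
      rw [mem_closedBall, dist_eq_norm]
      simp only [sub_add_cancel_left, norm_neg, norm_smul]
      rw [← dist_eq_norm, dist_comm, hpy, Real.norm_of_nonneg (by positivity)]
      field_simp; exact le_rfl)
  have ht0 : Tendsto (fun δ : ℝ => volume (frontier Ω ∩ closedBall (p + (2 * δ / r) • (y - p)) δ) / volume (closedBall (p + (2 * δ / r) • (y - p)) δ)) (nhdsWithin (0:ℝ) (Ioi 0)) (nhds 0) := by
    refine tendsto_const_nhds.congr' ?_
    filter_upwards [Ioo_mem_nhdsGT (show (0:ℝ) < r / 2 by positivity)] with δ hδ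
    have : frontier Ω ∩ closedBall (p + (2 * δ / r) • (y - p)) δ = ∅ := by
      rw [eq_empty_iff_forall_notMem]
      rintro z ⟨hz1, hz2⟩
      refine hdisj z ?_ hz1
      have h3 : dist (p + (2 * δ / r) • (y - p)) y = r - 2 * δ := by
        have : p + (2 * δ / r) • (y - p) - y = (1 - 2 * δ / r) • (p - y) := by module
        rw [dist_eq_norm, this, norm_smul, ← dist_eq_norm p y, hpy, Real.norm_of_nonneg]
        · field_simp
        · rw [sub_nonneg, div_le_one hr]; linarith [hδ.2]
      have := dist_triangle z (p + (2 * δ / r) • (y - p)) y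
      rw [mem_closedBall] at hz2
      rw [mem_ball]; linarith [hδ.1]
    simp [this]
  exact zero_ne_one (tendsto_nhds_unique ht0 ht)

lemma prodint {n : ℕ} (s : ℝ) (hs : 0 < s) (x : EuclideanSpace ℝ (Fin n)) (ε : ℝ) (hε : 0 < ε)
    (u : EuclideanSpace ℝ (Fin n) → ℝ) (hum : Measurable u) (C : ℝ) (hC : ∀ x, |u x| ≤ C)
    (S : Set (EuclideanSpace ℝ (Fin n))) (hS : S ⊆ (ball x ε)ᶜ) :
    IntegrableOn (fun y => u y * ‖x - y‖ ^ (-((n : ℝ) + 2*s))) S :=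
  ((far_int s hs x ε hε).mono_set hS).bdd_mul hum.aestronglyMeasurable
    (Eventually.of_forall hC)

lemma pv {n : ℕ} (Ω : Set (EuclideanSpace ℝ (Fin n))) (hΩo : IsOpen Ω)
    (s : ℝ) (hs : 0 < s) (α : ℝ) (hα : 0 < α)
    (u : EuclideanSpace ℝ (Fin n) → ℝ) (hum : Measurable u)
    (C₀ : ℝ) (hub : ∀ x, |u x| ≤ C₀) (x : EuclideanSpace ℝ (Fin n)) (r : ℝ) (hr : 0 < r)
    (hrΩ : ball x r ⊆ Ω)
    (C : ℝ) (hC0 : 0 ≤ C) (l : EuclideanSpace ℝ (Fin n) →L[ℝ] ℝ)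
    (hC : ∀ y ∈ ball x r, |u x - u y + l (y - x)| ≤ C * ‖x - y‖ ^ (2*s+α)) :
    ∃ L : ℝ, Tendsto (fun ε : ℝ => ∫ y in Ω \ Metric.ball x ε,
          (u x - u y) * ‖x - y‖ ^ (-((n : ℝ) + 2*s)))
        (nhdsWithin 0 (Set.Ioi 0)) (nhds L) := by
  set p : ℝ := -((n : ℝ) + 2*s) with hp
  have hwm : Measurable (fun y => u x - u y) := by fun_prop
  have hwb : ∀ y, |u x - u y| ≤ C₀ + C₀ := fun y => (abs_sub _ _).trans (add_le_add (hub _) (hub _))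
  set g : EuclideanSpace ℝ (Fin n) → ℝ := fun y => (u x - u y + l (y - x)) * ‖x - y‖ ^ p with hg
  have hgm : Measurable g := by
    refine Measurable.mul ?_ (kmeas _ _)
    fun_prop
  have hgi : IntegrableOn g (ball x r) := by
    refine ((near_int α hα x r).const_mul C).mono' hgm.aestronglyMeasurable ?_
    refine (ae_restrict_iff' measurableSet_ball).2 (Eventually.of_forall fun y hy => ?_)
    have h1 := hC y hy
    rw [hg, norm_mul, Real.norm_eq_abs, Real.norm_of_nonneg (by positivity : 0 ≤ ‖x - y‖ ^ p)]
    rcases (norm_nonneg (x - y)).eq_or_lt with h0 | h0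
    · have : y = x := by rw [eq_comm, norm_eq_zero, sub_eq_zero] at h0; exact h0.symm
      subst this
      simp only [sub_self, map_zero, add_zero, abs_zero, zero_mul]
      positivity
    · calc _ ≤ C * ‖x - y‖ ^ (2*s+α) * ‖x - y‖ ^ p := by gcongr
        _ = C * ‖x - y‖ ^ (α - n) := by
          rw [mul_assoc, ← Real.rpow_add h0]; congr 2; rw [hp]; ring
  have hlim : Tendsto (fun ε : ℝ => ∫ y in ball x r \ ball x ε, g y) (nhdsWithin 0 (Ioi 0))
      (nhds (∫ y in ball x r, (if y = x then 0 else g y))) := by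
    have e : ∀ ε : ℝ, ∫ y in ball x r \ ball x ε, g y = ∫ y in ball x r, (ball x ε)ᶜ.indicator g y := by
      intro ε
      rw [setIntegral_indicator measurableSet_ball.compl]; rfl
    simp only [e]
    refine tendsto_integral_filter_of_dominated_convergence (fun y => ‖g y‖) ?_ ?_ hgi.norm ?_
    · exact Eventually.of_forall fun ε =>
        (hgm.indicator measurableSet_ball.compl).aestronglyMeasurable
    · exact Eventually.of_forall fun ε => Eventually.of_forall fun y => norm_indicator_le_norm_self _ _
    · refine Eventually.of_forall fun y => ?_
      refine tendsto_const_nhds.congr' ?_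
      by_cases hy : y = x
      · filter_upwards [self_mem_nhdsWithin] with ε hε
        rw [indicator_of_notMem] 
        · simp [hy]
        · simpa [hy] using hε
      · filter_upwards [Ioo_mem_nhdsGT (dist_pos.2 hy)] with ε hε
        rw [indicator_of_mem]
        · simp [hy]
        · simpa using hε.2.le
  refine ⟨(∫ y in Ω \ ball x r, (u x - u y) * ‖x - y‖ ^ p) + _, (hlim.const_add _).congr' ?_⟩
  filter_upwards [Ioo_mem_nhdsGT hr] with ε hε
  have hset : Ω \ ball x ε = (Ω \ ball x r) ∪ (ball x r \ ball x ε) := by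
    ext z
    have : z ∈ ball x ε → z ∈ ball x r := fun h => ball_subset_ball hε.2.le h
    have := @hrΩ z
    simp only [mem_diff, mem_union]; tauto
  have I1 : IntegrableOn (fun y => (u x - u y) * ‖x - y‖ ^ p) (ball x ε)ᶜ :=
    prodint s hs x ε hε.1 _ hwm _ hwb _ subset_rfl
  have hs1 : ball x r \ ball x ε ⊆ (ball x ε)ᶜ := fun z hz => hz.2
  have hs2 : Ω \ ball x r ⊆ (ball x ε)ᶜ := fun z hz h => hz.2 (ball_subset_ball hε.2.le h)
  rw [hset, setIntegral_union (by
    rw [Set.disjoint_left]; intro z h1 h2; exact h1.2 h2.1) (measurableSet_ball.diff measurableSet_ball)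
    (I1.mono_set hs2) (I1.mono_set hs1)]
  congr 1
  have I2 := I1.mono_set hs1
  have I3 : IntegrableOn g (ball x r \ ball x ε) := hgi.mono_set diff_subset
  have := integral_sub I3 I2
  have h0 := odd_int p r ε x l
  have e2 : ∀ y, g y - (u x - u y) * ‖x - y‖ ^ p = l (y - x) * ‖x - y‖ ^ p := by
    intro y; rw [hg]; ring
  simp only [e2, h0] at this
  linarith

lemma exch {n : ℕ} (Ω : Set (EuclideanSpace ℝ (Fin n))) (hΩo : IsOpen Ω)
    (hfr : volume (frontier Ω) = 0)
    (s : ℝ) (hs : 0 < s)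
    (u : EuclideanSpace ℝ (Fin n) → ℝ) (hum : Measurable u)
    (C₀ : ℝ) (hub : ∀ x, |u x| ≤ C₀)
    (β : EuclideanSpace ℝ (Fin n) → ℝ) (hβm : Measurable β)
    (hβ01 : ∀ z, β z ∈ Set.Icc (0:ℝ) 1) (hβΩ : ∀ z ∈ Ω, β z = 0)
    (hRobin : ∀ᵐ x : EuclideanSpace ℝ (Fin n), x ∈ Ωᶜ →
      β x * u x + (1 - β x) * NNder s Ω u x = 0)
    (x : EuclideanSpace ℝ (Fin n)) (hx : x ∈ Ω) (r : ℝ) (hr : 0 < r) (hrΩ : ball x r ⊆ Ω) :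
    ∫ z in Ωᶜ, (u x - u z) * ‖x - z‖ ^ (-((n : ℝ) + 2*s)) =
      - (u x * ∫ y, (β x - β y) * ‖x - y‖ ^ (-((n : ℝ) + 2*s)))
        + ∫ y in Ω, (u x - u y) * kBeta s Ω β x y := by
  set p : ℝ := (n : ℝ) + 2*s with hp
  have hwm : Measurable (fun y => u x - u y) := by fun_prop
  have hwb : ∀ y, |u x - u y| ≤ C₀ + C₀ := fun y => (abs_sub _ _).trans (add_le_add (hub _) (hub _))
  have hC₀ : 0 ≤ C₀ := (abs_nonneg _).trans (hub x)
  have hΩr : Ωᶜ ⊆ (ball x r)ᶜ := compl_subset_compl.2 hrΩ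
  have hKx : IntegrableOn (fun z => ‖x - z‖ ^ (-p)) Ωᶜ := (far_int s hs x r hr).mono_set hΩr
  have hβb : ∀ z, |β z| ≤ 1 := fun z => abs_le.2 ⟨by linarith [(hβ01 z).1], (hβ01 z).2⟩
  have h1βb : ∀ z, |1 - β z| ≤ 1 := fun z =>
    abs_le.2 ⟨by linarith [(hβ01 z).2], by linarith [(hβ01 z).1]⟩
  -- the beta term
  have hB : ∫ y, (β x - β y) * ‖x - y‖ ^ (-p) = - ∫ z in Ωᶜ, β z * ‖x - z‖ ^ (-p) := by
    rw [← integral_neg, ← integral_indicator hΩo.measurableSet.compl]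
    congr 1; ext y
    by_cases hy : y ∈ Ω
    · simp [hy, hβΩ x hx, hβΩ y hy]
    · simp [hy, hβΩ x hx]
  have hBi : IntegrableOn (fun z => β z * ‖x - z‖ ^ (-p)) Ωᶜ :=
    prodint s hs x r hr β hβm 1 hβb _ hΩr
  -- the normalization
  set D : EuclideanSpace ℝ (Fin n) → ℝ := fun z => ∫ w in Ω, ‖z - w‖ ^ (-p) with hD
  have hK2 : Measurable (fun q : EuclideanSpace ℝ (Fin n) × EuclideanSpace ℝ (Fin n) =>
      ‖q.1 - q.2‖ ^ (-p)) :=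
    Measurable.pow_const (measurable_fst.sub measurable_snd).norm _
  have hDm : Measurable D :=
    (StronglyMeasurable.integral_prod_right' (ν := volume.restrict Ω) hK2.stronglyMeasurable).measurable
  have hext : ∀ z ∈ (closure Ω)ᶜ, ∃ ε > 0, Ω ⊆ (ball z ε)ᶜ := by
    intro z hz
    obtain ⟨ε, hε, h⟩ := Metric.isOpen_iff.1 isClosed_closure.isOpen_compl z hz
    exact ⟨ε, hε, fun w hw hw' => h hw' (subset_closure hw)⟩
  have hKz : ∀ z ∈ (closure Ω)ᶜ, IntegrableOn (fun w => ‖z - w‖ ^ (-p)) Ω := by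
    intro z hz
    obtain ⟨ε, hε, h⟩ := hext z hz
    exact (far_int s hs z ε hε).mono_set h
  have hDpos : ∀ z ∈ (closure Ω)ᶜ, 0 < D z := by
    intro z hz
    rw [hD]
    refine (setIntegral_pos_iff_support_of_nonneg_ae
      (Eventually.of_forall fun w => by positivity) (hKz z hz)).2 ?_
    have : Function.support (fun w => ‖z - w‖ ^ (-p)) ∩ Ω = Ω := by
      refine inter_eq_right.2 fun w hw => ?_
      have : z ≠ w := fun h => hz (subset_closure (h ▸ hw))
      exact (Real.rpow_pos_of_pos (norm_pos_iff.2 (sub_ne_zero.2 this)) _).ne'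
    rw [this]
    exact hΩo.measure_pos _ ⟨x, hx⟩
  have hae : ∀ᵐ z ∂(volume.restrict Ωᶜ), z ∈ (closure Ω)ᶜ := by
    rw [ae_restrict_iff' hΩo.measurableSet.compl]
    filter_upwards [measure_eq_zero_iff_ae_notMem.1 hfr] with z hz hzΩ hzc
    exact hz ⟨hzc, fun h => hzΩ (interior_subset h)⟩
  -- the double integrand
  set F : EuclideanSpace ℝ (Fin n) → EuclideanSpace ℝ (Fin n) → ℝ := fun z y =>
    (1 - β z) * ‖x - z‖ ^ (-p) * (D z)⁻¹ * ((u x - u y) * ‖z - y‖ ^ (-p)) with hF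
  have hFm : Measurable (Function.uncurry F) := by
    have a1 : Measurable (fun z => (1 - β z) * ‖x - z‖ ^ (-p) * (D z)⁻¹) :=
      ((measurable_const.sub hβm).mul (kmeas _ _)).mul hDm.inv
    exact (a1.comp measurable_fst).mul ((hwm.comp measurable_snd).mul hK2)
  have hwz : ∀ z ∈ (closure Ω)ᶜ, IntegrableOn (fun y => (u x - u y) * ‖z - y‖ ^ (-p)) Ω := by
    intro z hz
    obtain ⟨ε, hε, h⟩ := hext z hz
    exact prodint s hs z ε hε _ hwm _ hwb _ h
  have hFi : Integrable (Function.uncurry F) ((volume.restrict Ωᶜ).prod (volume.restrict Ω)) := by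
    rw [integrable_prod_iff hFm.aestronglyMeasurable]
    constructor
    · filter_upwards [hae] with z hz
      exact (hwz z hz).const_mul ((1 - β z) * ‖x - z‖ ^ (-p) * (D z)⁻¹)
    · refine (hKx.const_mul (C₀ + C₀)).mono'
        hFm.norm.stronglyMeasurable.integral_prod_right'.aestronglyMeasurable ?_
      filter_upwards [hae] with z hz
      rw [Real.norm_of_nonneg (integral_nonneg fun y => norm_nonneg _)]
      have hDz := hDpos z hz
      have : ∀ y, ‖Function.uncurry F (z, y)‖ ≤
          (‖x - z‖ ^ (-p) * (D z)⁻¹ * (C₀ + C₀)) * ‖z - y‖ ^ (-p) := by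
        intro y
        simp only [Function.uncurry, hF, norm_mul, norm_inv]
        rw [Real.norm_of_nonneg hDz.le, Real.norm_of_nonneg (by positivity : 0 ≤ ‖x - z‖ ^ (-p)),
          Real.norm_of_nonneg (by positivity : 0 ≤ ‖z - y‖ ^ (-p)), Real.norm_eq_abs,
          Real.norm_eq_abs]
        calc _ ≤ 1 * ‖x - z‖ ^ (-p) * (D z)⁻¹ * ((C₀ + C₀) * ‖z - y‖ ^ (-p)) := by
              gcongr
              · exact h1βb z
              · exact hwb y
          _ = _ := by ring
      calc _ ≤ ∫ y in Ω, (‖x - z‖ ^ (-p) * (D z)⁻¹ * (C₀ + C₀)) * ‖z - y‖ ^ (-p) := by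
            refine integral_mono ((hwz z hz).const_mul ((1 - β z) * ‖x - z‖ ^ (-p) * (D z)⁻¹)).norm ((hKz z hz).const_mul _) this
        _ = (‖x - z‖ ^ (-p) * (D z)⁻¹ * (C₀ + C₀)) * D z := by rw [integral_const_mul]
        _ = (C₀ + C₀) * ‖x - z‖ ^ (-p) := by field_simp
  have hFint : Integrable (fun z => ∫ y in Ω, F z y) (volume.restrict Ωᶜ) := hFi.integral_prod_left
  have hswap : ∫ z in Ωᶜ, ∫ y in Ω, F z y = ∫ y in Ω, (u x - u y) * kBeta s Ω β x y := by
    rw [integral_integral_swap hFi]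
    congr 1; ext y
    rw [kBeta, ← integral_const_mul]
    congr 1; ext z
    simp only [hF, hD, ← hp]
    rw [Real.rpow_neg (norm_nonneg (x - z)), Real.rpow_neg (norm_nonneg (z - y)), norm_sub_rev z y]
    rw [div_eq_mul_inv, mul_inv, mul_inv]
    ring
  have hpt : ∀ᵐ z ∂(volume.restrict Ωᶜ), (u x - u z) * ‖x - z‖ ^ (-p) =
      u x * (β z * ‖x - z‖ ^ (-p)) + ∫ y in Ω, F z y := by
    filter_upwards [hae, ae_restrict_of_ae hRobin, ae_restrict_mem hΩo.measurableSet.compl] with z hz hR hzΩ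
    have hR := hR hzΩ
    have hDz := hDpos z hz
    obtain ⟨ε, hε, h⟩ := hext z hz
    have Iu : IntegrableOn (fun y => u y * ‖z - y‖ ^ (-p)) Ω := prodint s hs z ε hε _ hum _ hub _ h
    have e1 : ∀ a : ℝ, ∫ y in Ω, (a - u y) * ‖z - y‖ ^ (-p) = a * D z - ∫ y in Ω, u y * ‖z - y‖ ^ (-p) := by
      intro a
      simp only [sub_mul]
      rw [integral_sub ((hKz z hz).const_mul a) Iu, integral_const_mul]
    simp only [hF]
    rw [integral_const_mul, e1]
    rw [NNder, ← hp, e1] at hR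
    change β z * u z + (1 - β z) * ((D z)⁻¹ * _) = 0 at hR
    set J := ∫ y in Ω, u y * ‖z - y‖ ^ (-p)
    have e3 : (D z)⁻¹ * (u z * D z - J) = u z - (D z)⁻¹ * J := by field_simp
    have e4 : (D z)⁻¹ * (u x * D z - J) = u x - (D z)⁻¹ * J := by field_simp
    rw [e3] at hR
    rw [mul_assoc _ (D z)⁻¹, e4]
    have : u z = (1 - β z) * ((D z)⁻¹ * J) := by linarith
    rw [this]; ring
  rw [integral_congr_ae hpt, integral_add (hBi.const_mul _) hFint, integral_const_mul, hswap, hB]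
  ring


/-- Theorem 1.1: if u ∈ C^{2s+α}_loc(Ω) ∩ L^∞ satisfies the nonlocal
Robin condition β u + (1−β) Ñ_s u = 0 a.e. outside Ω (β measurable with values in
[0,1], β = 0 in Ω), then for every x ∈ Ω, interpreting the fractional Laplacian
and the regional fractional Laplacian as principal values,
(−Δ)^s u(x) = (−Δ)^s_Ω u(x) − u(x)·(−Δ)^s β(x) + c_{n,s} ∫_Ω (u(x)−u(y)) k_β(x,y) dy,
where (−Δ)^s β(x) = c_{n,s} ∫ (β(x)−β(y))|x−y|^{−(n+2s)} dy converges absolutely. -/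
theorem stmt12 {n : ℕ} (Ω : Set (EuclideanSpace ℝ (Fin n)))
    (hΩo : IsOpen Ω) (hΩb : Bornology.IsBounded Ω) (hΩc : HasC11Boundary Ω)
    (s : ℝ) (hs : s ∈ Set.Ioo (0:ℝ) 1) (α : ℝ) (hα : 0 < α)
    (c : ℝ) (hc : 0 < c)  -- the normalizing constant c_{n,s}
    (u : EuclideanSpace ℝ (Fin n) → ℝ) (hum : Measurable u)
    (hub : ∃ C : ℝ, ∀ x, |u x| ≤ C)
    (hureg : HolderLoc (2*s + α) Ω u)
    (β : EuclideanSpace ℝ (Fin n) → ℝ) (hβm : Measurable β)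
    (hβ01 : ∀ z, β z ∈ Set.Icc (0:ℝ) 1) (hβΩ : ∀ z ∈ Ω, β z = 0)
    (hRobin : ∀ᵐ x : EuclideanSpace ℝ (Fin n), x ∈ Ωᶜ →
      β x * u x + (1 - β x) * NNder s Ω u x = 0) :
    ∀ x ∈ Ω, ∃ L : ℝ,
      -- the regional fractional Laplacian (−Δ)^s_Ω u(x) exists as a principal value L
      Filter.Tendsto
        (fun ε : ℝ => c * ∫ y in Ω \ Metric.ball x ε,
          (u x - u y) * ‖x - y‖ ^ (-((n : ℝ) + 2*s)))
        (nhdsWithin 0 (Set.Ioi 0)) (nhds L) ∧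
      -- and the full fractional Laplacian (−Δ)^s u(x) exists as a principal value,
      -- equal to L − u(x)·(−Δ)^s β(x) + c ∫_Ω (u(x)−u(y)) k_β(x,y) dy
      Filter.Tendsto
        (fun ε : ℝ => c * ∫ y in (Metric.ball x ε)ᶜ,
          (u x - u y) * ‖x - y‖ ^ (-((n : ℝ) + 2*s)))
        (nhdsWithin 0 (Set.Ioi 0))
        (nhds (L - u x * (c * ∫ y, (β x - β y) * ‖x - y‖ ^ (-((n : ℝ) + 2*s)))
          + c * ∫ y in Ω, (u x - u y) * kBeta s Ω β x y)) := by
  obtain ⟨C₀, hub⟩ := hub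
  obtain ⟨R, hR, hfr⟩ := hΩc
  have hfr0 : volume (frontier Ω) = 0 := frontier_null Ω R hR fun p hp => by
    obtain ⟨y, _, h1, h2⟩ := (hfr p hp).2
    exact ⟨y, h1, h2⟩
  intro x hx
  obtain ⟨r, hr, hrΩ, hH⟩ := hureg x hx
  obtain ⟨C, l, hC0, hC⟩ := approx (2*s+α) (by linarith [hs.1]) u x r hr hH
  obtain ⟨L, hL⟩ := pv Ω hΩo s hs.1 α hα u hum C₀ hub x r hr hrΩ C hC0 l hC
  refine ⟨c * L, hL.const_mul c, ?_⟩
  have hex := exch Ω hΩo hfr0 s hs.1 u hum C₀ hub β hβm hβ01 hβΩ hRobin x hx r hr hrΩ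
  have hwm : Measurable (fun y => u x - u y) := by fun_prop
  have hwb : ∀ y, |u x - u y| ≤ C₀ + C₀ := fun y => (abs_sub _ _).trans (add_le_add (hub _) (hub _))
  have key := (hL.add_const
    (∫ z in Ωᶜ, (u x - u z) * ‖x - z‖ ^ (-((n : ℝ) + 2*s)))).const_mul c
  rw [hex] at key
  convert key.congr' ?_ using 2
  · ring
  · filter_upwards [Ioo_mem_nhdsGT hr] with ε hε
    have hset : (ball x ε)ᶜ = (Ω \ ball x ε) ∪ Ωᶜ := by
      ext z
      have h1 : z ∈ ball x ε → z ∈ Ω := fun h => hrΩ (ball_subset_ball hε.2.le h)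
      simp only [mem_compl_iff, mem_diff, mem_union]; tauto
    have I1 : IntegrableOn (fun y => (u x - u y) * ‖x - y‖ ^ (-((n : ℝ) + 2*s))) (ball x ε)ᶜ :=
      prodint s hs.1 x ε hε.1 _ hwm _ hwb _ subset_rfl
    rw [← hex, hset, setIntegral_union (by
      rw [Set.disjoint_left]; intro z h1 h2; exact h2 h1.1) hΩo.measurableSet.compl
      (I1.mono_set (by rw [hset]; exact subset_union_left))
      (I1.mono_set (by rw [hset]; exact subset_union_right))]
end
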